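/- Let S be the set of all quadruples (L_1,L_2,L_3,L_4) of 4×4 integer signed permutation matrices satisfying the garden algebra relations, and for A, A' ∈ S let g(A,A') := Σ_{I≠J} trace(L_Iᵀ·L_J·L'_Iᵀ·L'_J) (sum over ordered pairs of distinct I,J ∈ {1,2,3,4}). Then among the ordered pairs (A,A') ∈ S × S: exactly 14155776 pairs satisfy g(A,A') = −48 (gadget value 1); exactly 84934656 pairs satisfy g(A,A') = −16 (gadget value 1/3); exactly 127401984 pairs satisfy g(A,A') = 16 (gadget value −1/3); and exactly 1132462080 pairs satisfy g(A,A') = 0 (gadget value 0). -/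

import Mathlib

open Matrix

/-- A signed permutation matrix: exactly one nonzero entry in each row and column,
that entry being `1` or `-1`. -/
def IsSignedPerm {n : ℕ} (M : Matrix (Fin n) (Fin n) ℤ) : Prop :=
  (∀ i j, M i j = 0 ∨ M i j = 1 ∨ M i j = -1) ∧
  (∀ i, ∃! j, M i j ≠ 0) ∧
  (∀ j, ∃! i, M i j ≠ 0)

/-- The garden algebra relations for a family of `d × d` integer matrices. -/
def GardenRel {d N : ℕ} (L : Fin N → Matrix (Fin d) (Fin d) ℤ) : Prop :=
  ∀ I J : Fin N,
    (L I * (L J)ᵀ + L J * (L I)ᵀ =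
      if I = J then (2 : ℤ) • (1 : Matrix (Fin d) (Fin d) ℤ) else 0) ∧
    ((L I)ᵀ * L J + (L J)ᵀ * L I =
      if I = J then (2 : ℤ) • (1 : Matrix (Fin d) (Fin d) ℤ) else 0)

/-- The L-matrices of a (4,1) valise adinkra: a quadruple of 4×4 integer signed
permutation matrices satisfying the garden algebra relations. -/
def IsAdinkra (L : Fin 4 → Matrix (Fin 4) (Fin 4) ℤ) : Prop :=
  (∀ I, IsSignedPerm (L I)) ∧ GardenRel L

/-- `Σ_{I≠J} trace(L_Iᵀ·L_J·L'_Iᵀ·L'_J)`, summed over ordered pairs of distinct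
`I, J ∈ {1,2,3,4}`; the gadget is `OG(A,A') = -(1/48)` times this quantity. -/
def gadgetSum (L L' : Fin 4 → Matrix (Fin 4) (Fin 4) ℤ) : ℤ :=
  ∑ I : Fin 4, ∑ J : Fin 4,
    if I ≠ J then Matrix.trace ((L I)ᵀ * L J * (L' I)ᵀ * L' J) else 0

/-- The set of (4,1) valise adinkras, encoded by their L-matrices. -/
def Adinkra41 : Type :=
  {L : Fin 4 → Matrix (Fin 4) (Fin 4) ℤ // IsAdinkra L}

/-!
Integer orthogonal matrices are exactly the signed permutation matrices. Multiplying an adinkra on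
the left by `L₁ᵀ` makes `L₁ = 1` without affecting gadgets, and the garden relations then say that
the other three matrices are antisymmetric, orthogonal and pairwise anticommuting. An antisymmetric
orthogonal `4 × 4` matrix is multiplication by a unit imaginary quaternion, from the left or (up to
sign) from the right, and all left multiplications commute with all right ones. So the three
matrices lie on the same side `ε`, and their quaternions are the rows of some `W` in `O(3, ℤ)`.

The quaternion product shows that the gadget sum of `(ε, W)` and `(δ, V)` vanishes for `ε ≠ δ` and
is `-8 (1 + det U) tr U` with `U = W Vᵀ` for `ε = δ`. It depends only on the quotient in the group
`{±1} × O(3, ℤ)`, and is nonzero only if `U` is one of the 24 rotations of the cube, where it equals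
`-16 tr U`: one rotation has trace `3`, six have trace `1` and nine have trace `-1`.
-/

section Orthogonal

variable {n R : Type*} [Fintype n] [DecidableEq n] [CommRing R]

theorem mem_orthogonalGroup_iff_dotProduct {U : Matrix n n R} :
    U ∈ orthogonalGroup n R ↔ ∀ i j, U i ⬝ᵥ U j = if i = j then 1 else 0 := by
  simp only [mem_orthogonalGroup_iff, ← Matrix.ext_iff, mul_apply', one_apply]
  rfl

theorem transpose_mul_mul_of_mem_orthogonalGroup {P : Matrix n n R} (hP : P ∈ orthogonalGroup n R)
    (A B : Matrix n n R) : (P * A)ᵀ * (P * B) = Aᵀ * B := by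
  rw [transpose_mul, Matrix.mul_assoc, ← Matrix.mul_assoc Pᵀ, (mem_orthogonalGroup_iff' _ _).mp hP,
    Matrix.one_mul]

theorem adjugate_of_mem_orthogonalGroup {U : Matrix n n R} (hU : U ∈ orthogonalGroup n R) :
    U.adjugate = U.det • Uᵀ := by
  rw [mem_orthogonalGroup_iff'] at hU
  calc U.adjugate = Uᵀ * U * U.adjugate := by rw [hU, Matrix.one_mul]
    _ = U.det • Uᵀ := by rw [Matrix.mul_assoc, mul_adjugate, Matrix.mul_smul, Matrix.mul_one]

theorem trace_sq_sub_trace_mul_self (A : Matrix (Fin 3) (Fin 3) R) :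
    A.trace ^ 2 - (A * A).trace = 2 * A.adjugate.trace := by
  simp [adjugate_fin_three, trace, mul_apply, Fin.sum_univ_three]
  ring

theorem sum_sum_mul_sub_mul_of_mem_orthogonalGroup {A : Matrix (Fin 3) (Fin 3) R}
    (hA : A ∈ orthogonalGroup (Fin 3) R) :
    ∑ i, ∑ j, (A i i * A j j - A i j * A j i) = 2 * (A.det * A.trace) :=
  calc ∑ i, ∑ j, (A i i * A j j - A i j * A j i) = A.trace ^ 2 - (A * A).trace := by
        simp only [Finset.sum_sub_distrib, trace, diag_apply, mul_apply, sq, Finset.sum_mul_sum]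
    _ = 2 * (A.det * A.trace) := by
        rw [trace_sq_sub_trace_mul_self, adjugate_of_mem_orthogonalGroup hA, trace_smul,
          trace_transpose, smul_eq_mul]

end Orthogonal

section SignedPerm

variable {n : ℕ}

/-- The signed permutation matrix with entry `s i` at position `(i, σ i)`. -/
def signedPerm (s : Fin n → ℤˣ) (σ : Equiv.Perm (Fin n)) : Matrix (Fin n) (Fin n) ℤ :=
  of fun i => Pi.single (σ i) (s i : ℤ)

theorem isSignedPerm_signedPerm (s : Fin n → ℤˣ) (σ : Equiv.Perm (Fin n)) :
    IsSignedPerm (signedPerm s σ) := by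
  have hne (i j : Fin n) : signedPerm s σ i j ≠ 0 ↔ j = σ i := by
    simp [signedPerm, Pi.single_apply]
  refine ⟨fun i j => ?_, fun i => ?_, fun j => ?_⟩
  · rcases Int.units_eq_one_or (s i) with hs | hs <;>
      by_cases h : j = σ i <;> simp [signedPerm, h, hs]
  · simp only [hne, existsUnique_eq]
  · simp only [hne, ← Equiv.symm_apply_eq, existsUnique_eq']

theorem signedPerm_mem_orthogonalGroup (s : Fin n → ℤˣ) (σ : Equiv.Perm (Fin n)) :
    signedPerm s σ ∈ orthogonalGroup (Fin n) ℤ := by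
  have hrow (i : Fin n) : signedPerm s σ i = Pi.single (σ i) (s i : ℤ) := rfl
  rw [mem_orthogonalGroup_iff_dotProduct]
  intro i j
  rcases eq_or_ne i j with rfl | h
  · simp [hrow, ← Units.val_mul]
  · simp [hrow, h]

theorem signedPerm_injective :
    Function.Injective fun p : (Fin n → ℤˣ) × Equiv.Perm (Fin n) => signedPerm p.1 p.2 := by
  rintro ⟨s, σ⟩ ⟨t, τ⟩ h
  have hentry (i : Fin n) : (s i : ℤ) = if σ i = τ i then (t i : ℤ) else 0 := by
    simpa [signedPerm, Pi.single_apply] using congrFun (congrFun h i) (σ i)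
  have hσ (i : Fin n) : σ i = τ i := by
    by_contra hne
    exact (s i).ne_zero ((hentry i).trans (if_neg hne))
  have hs (i : Fin n) : s i = t i := Units.ext ((hentry i).trans (if_pos (hσ i)))
  exact Prod.ext (funext hs) (Equiv.ext hσ)

theorem exists_eq_single_of_dotProduct_self_eq_one {ι : Type*} [Fintype ι] [DecidableEq ι]
    {v : ι → ℤ} (hv : v ⬝ᵥ v = 1) : ∃ (u : ℤˣ) (i : ι), v = Pi.single i (u : ℤ) := by
  obtain ⟨i, hi⟩ : ∃ i, v i ≠ 0 := by
    by_contra! h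
    simp [funext h] at hv
  have hzero (j : ι) (hj : j ≠ i) : v j = 0 := by
    have hpair : v i * v i + v j * v j ≤ 1 := by
      rw [← hv, ← Finset.sum_pair (f := fun k => v k * v k) hj.symm]
      exact Finset.sum_le_univ_sum_of_nonneg fun k => mul_self_nonneg (v k)
    have hpos : 0 < v i * v i := mul_self_pos.mpr hi
    exact mul_self_eq_zero.mp (le_antisymm (by lia) (mul_self_nonneg _))
  have hsingle : v = Pi.single i (v i) := by
    ext j
    by_cases hj : j = i
    · rw [hj, Pi.single_eq_same]
    · rw [hzero j hj, Pi.single_eq_of_ne hj]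
  rw [hsingle, single_dotProduct, Pi.single_eq_same] at hv
  exact ⟨Units.mkOfMulEqOne _ _ hv, i, hsingle⟩

theorem exists_eq_signedPerm_of_mem_orthogonalGroup {M : Matrix (Fin n) (Fin n) ℤ}
    (hM : M ∈ orthogonalGroup (Fin n) ℤ) : ∃ s σ, M = signedPerm s σ := by
  have hdot := mem_orthogonalGroup_iff_dotProduct.mp hM
  choose s f hf using fun i =>
    exists_eq_single_of_dotProduct_self_eq_one ((hdot i i).trans (if_pos rfl))
  have hinj : Function.Injective f := fun i j hij => by
    by_contra hne
    have := hdot i j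
    simp [hf, hij, hne] at this
  exact ⟨s, .ofBijective f (Finite.injective_iff_bijective.mp hinj), funext hf⟩

theorem IsSignedPerm.mem_orthogonalGroup {M : Matrix (Fin n) (Fin n) ℤ} (hM : IsSignedPerm M) :
    M ∈ orthogonalGroup (Fin n) ℤ := by
  obtain ⟨hent, hrow, hcol⟩ := hM
  rw [mem_orthogonalGroup_iff_dotProduct]
  intro i i'
  rw [dotProduct]
  split_ifs with h
  · subst h
    obtain ⟨j, hj, huniq⟩ := hrow i
    rw [Finset.sum_eq_single j]
    · rcases hent i j with h | h | h <;> simp_all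
    · intro k _ hk
      simp [not_imp_comm.mp (huniq k) hk]
    · simp
  · refine Finset.sum_eq_zero fun j _ => ?_
    by_contra hne
    exact h ((hcol j).unique (left_ne_zero_of_mul hne) (right_ne_zero_of_mul hne))

theorem isSignedPerm_iff_mem_orthogonalGroup {M : Matrix (Fin n) (Fin n) ℤ} :
    IsSignedPerm M ↔ M ∈ orthogonalGroup (Fin n) ℤ := by
  refine ⟨IsSignedPerm.mem_orthogonalGroup, fun hM => ?_⟩
  obtain ⟨s, σ, rfl⟩ := exists_eq_signedPerm_of_mem_orthogonalGroup hM
  exact isSignedPerm_signedPerm s σ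

/-- Integer orthogonal matrices, parametrized by signs and permutations. -/
noncomputable def signedPermEquiv (n : ℕ) :
    (Fin n → ℤˣ) × Equiv.Perm (Fin n) ≃ orthogonalGroup (Fin n) ℤ :=
  .ofBijective (fun p => ⟨signedPerm p.1 p.2, signedPerm_mem_orthogonalGroup p.1 p.2⟩)
    ⟨fun _ _ h => signedPerm_injective (congrArg Subtype.val h), fun ⟨_, hM⟩ =>
      let ⟨s, σ, h⟩ := exists_eq_signedPerm_of_mem_orthogonalGroup hM
      ⟨(s, σ), Subtype.ext h.symm⟩⟩

theorem natCard_orthogonalGroup_int (n : ℕ) :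
    Nat.card (orthogonalGroup (Fin n) ℤ) = 2 ^ n * n.factorial := by
  rw [← Nat.card_congr (signedPermEquiv n)]
  simp [Fintype.card_perm]

end SignedPerm

section Garden

theorem gardenRel_iff_of_mem_orthogonalGroup {d N : ℕ} {L : Fin N → Matrix (Fin d) (Fin d) ℤ}
    (hL : ∀ I, L I ∈ orthogonalGroup (Fin d) ℤ) :
    GardenRel L ↔ Pairwise fun I J => (L I)ᵀ * L J + (L J)ᵀ * L I = 0 := by
  refine ⟨fun h I J hIJ => by simpa only [hIJ, if_false] using (h I J).2, fun h I J => ?_⟩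
  have hmul (I) : L I * (L I)ᵀ = 1 := (mem_orthogonalGroup_iff _ _).mp (hL I)
  have hmul' (I) : (L I)ᵀ * L I = 1 := (mem_orthogonalGroup_iff' _ _).mp (hL I)
  split_ifs with hIJ
  · subst hIJ
    simp only [hmul, hmul', two_smul, and_self]
  · refine ⟨?_, h hIJ⟩
    -- Conjugating by `L I` turns the second garden relation into the first.
    calc L I * (L J)ᵀ + L J * (L I)ᵀ
        = L I * ((L I)ᵀ * L J + (L J)ᵀ * L I) * (L I)ᵀ := by
          simp only [mul_add, add_mul, ← Matrix.mul_assoc, hmul, Matrix.one_mul]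
          rw [Matrix.mul_assoc _ _ (L I)ᵀ, hmul, Matrix.mul_one, add_comm]
      _ = 0 := by rw [h hIJ, Matrix.mul_zero, Matrix.zero_mul]

theorem isAdinkra_iff {L : Fin 4 → Matrix (Fin 4) (Fin 4) ℤ} :
    IsAdinkra L ↔ (∀ I, L I ∈ orthogonalGroup (Fin 4) ℤ) ∧
      Pairwise fun I J => (L I)ᵀ * L J + (L J)ᵀ * L I = 0 := by
  simp only [IsAdinkra, isSignedPerm_iff_mem_orthogonalGroup]
  exact and_congr_right gardenRel_iff_of_mem_orthogonalGroup

theorem IsAdinkra.mul_left {L : Fin 4 → Matrix (Fin 4) (Fin 4) ℤ} (hL : IsAdinkra L)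
    {P : Matrix (Fin 4) (Fin 4) ℤ} (hP : P ∈ orthogonalGroup (Fin 4) ℤ) :
    IsAdinkra fun I => P * L I := by
  rw [isAdinkra_iff] at hL ⊢
  simp only [transpose_mul_mul_of_mem_orthogonalGroup hP]
  exact ⟨fun I => mul_mem hP (hL.1 I), hL.2⟩

theorem gadgetSum_mul_left {P P' : Matrix (Fin 4) (Fin 4) ℤ}
    (hP : P ∈ orthogonalGroup (Fin 4) ℤ) (hP' : P' ∈ orthogonalGroup (Fin 4) ℤ)
    (L L' : Fin 4 → Matrix (Fin 4) (Fin 4) ℤ) :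
    gadgetSum (fun I => P * L I) (fun I => P' * L' I) = gadgetSum L L' := by
  simp only [gadgetSum, Matrix.mul_assoc ((L _)ᵀ * _),
    transpose_mul_mul_of_mem_orthogonalGroup hP, transpose_mul_mul_of_mem_orthogonalGroup hP']

end Garden

section Quaternion

variable {R : Type*} [CommRing R]

/-- The general antisymmetric `4 × 4` matrix: first column `(0, a)`, lower right block the matrix
of `w ⨯₃ ·`. -/
def skewOfVec (a w : Fin 3 → R) : Matrix (Fin 4) (Fin 4) R :=
  !![0, -a 0, -a 1, -a 2;
    a 0, 0, -w 2, w 1;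
    a 1, w 2, 0, -w 0;
    a 2, -w 1, w 0, 0]

/-- Multiplication by the imaginary quaternion with coordinates `v`, in the basis `1, i, j, k`:
left multiplication for chirality `ε = 1`, negated right multiplication for `ε = -1`. -/
def imQuat (ε : ℤˣ) (v : Fin 3 → R) : Matrix (Fin 4) (Fin 4) R :=
  skewOfVec (ε • v) v

theorem skewOfVec_transpose (a w : Fin 3 → R) : (skewOfVec a w)ᵀ = -skewOfVec a w := by
  ext i j
  fin_cases i <;> fin_cases j <;> simp [skewOfVec]

theorem skewOfVec_inj {a w b u : Fin 3 → R} :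
    skewOfVec a w = skewOfVec b u ↔ a = b ∧ w = u := by
  refine ⟨fun h => ⟨?_, ?_⟩, fun ⟨hab, hwu⟩ => hab ▸ hwu ▸ rfl⟩
  · ext i
    fin_cases i
    · exact congrFun (congrFun h 1) 0
    · exact congrFun (congrFun h 2) 0
    · exact congrFun (congrFun h 3) 0
  · ext i
    fin_cases i
    · exact congrFun (congrFun h 3) 2
    · exact congrFun (congrFun h 1) 3
    · exact congrFun (congrFun h 2) 1

theorem exists_eq_skewOfVec [NoZeroDivisors R] [NeZero (2 : R)] {M : Matrix (Fin 4) (Fin 4) R}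
    (hM : Mᵀ = -M) : ∃ a w, M = skewOfVec a w := by
  have hneg (i j : Fin 4) : M i j = -M j i := congrFun (congrFun hM j) i
  have hdiag (i : Fin 4) : M i i = 0 := by
    have h : 2 * M i i = 0 := by linear_combination hneg i i
    exact (mul_eq_zero.mp h).resolve_left two_ne_zero
  refine ⟨![M 1 0, M 2 0, M 3 0], ![M 3 2, M 1 3, M 2 1], ?_⟩
  ext i j
  fin_cases i <;> fin_cases j <;> simp [skewOfVec, hdiag, ← hneg]

theorem exists_eq_units_smul_of_cross_eq_zero [NoZeroDivisors R] {a w : Fin 3 → R}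
    (ha : a ⬝ᵥ a = 1) (hw : w ⬝ᵥ w = 1) (h : a ⨯₃ w = 0) : ∃ ε : ℤˣ, a = ε • w := by
  have haw : a = (a ⬝ᵥ w) • w := by
    have := cross_cross_eq_smul_sub_smul a w w
    rw [h, hw, map_zero, LinearMap.zero_apply, one_smul] at this
    exact (sub_eq_zero.mp this.symm).symm
  have hsq : (a ⬝ᵥ w) * (a ⬝ᵥ w) = 1 := by
    rw [haw, dotProduct_smul, smul_dotProduct, hw] at ha
    simpa using ha
  rcases mul_self_eq_one_iff.mp hsq with hε | hε
  · exact ⟨1, by rw [haw, hε]; simp⟩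
  · exact ⟨-1, by rw [haw, hε]; simp⟩

theorem dotProduct_and_cross_of_skewOfVec_mem_orthogonalGroup [NoZeroDivisors R] [NeZero (2 : R)]
    {a w : Fin 3 → R} (h : skewOfVec a w ∈ orthogonalGroup (Fin 4) R) :
    a ⬝ᵥ a = 1 ∧ w ⬝ᵥ w = 1 ∧ a ⨯₃ w = 0 := by
  have hrow := mem_orthogonalGroup_iff_dotProduct.mp h
  set S := skewOfVec a w with hS
  have hfirst : S 0 ⬝ᵥ S 0 = a ⬝ᵥ a := by
    simp [hS, skewOfVec, dotProduct, Fin.sum_univ_succ]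
  have hrest : S 1 ⬝ᵥ S 1 + S 2 ⬝ᵥ S 2 + S 3 ⬝ᵥ S 3 = a ⬝ᵥ a + 2 * (w ⬝ᵥ w) := by
    simp [hS, skewOfVec, dotProduct, Fin.sum_univ_succ]
    ring
  have hcross (i : Fin 3) : (a ⨯₃ w) i = S 0 ⬝ᵥ S i.succ := by
    fin_cases i <;> simp [hS, skewOfVec, dotProduct, Fin.sum_univ_succ, cross_apply] <;> ring
  simp only [hrow, if_true] at hfirst hrest
  have hw : 2 * (w ⬝ᵥ w) = 2 * 1 := by linear_combination -hrest + hfirst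
  refine ⟨hfirst.symm, mul_left_cancel₀ two_ne_zero hw, funext fun i => ?_⟩
  rw [hcross, hrow, if_neg (Fin.succ_ne_zero i).symm, Pi.zero_apply]

theorem imQuat_zero (ε : ℤˣ) : imQuat ε (0 : Fin 3 → R) = 0 := by
  ext i j
  fin_cases i <;> fin_cases j <;> simp [imQuat, skewOfVec]

theorem imQuat_neg (ε : ℤˣ) (v : Fin 3 → R) : imQuat ε (-v) = -imQuat ε v := by
  ext i j
  fin_cases i <;> fin_cases j <;> simp [imQuat, skewOfVec]

theorem imQuat_transpose (ε : ℤˣ) (v : Fin 3 → R) : (imQuat ε v)ᵀ = -imQuat ε v :=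
  skewOfVec_transpose _ _

theorem imQuat_mul (ε : ℤˣ) (v w : Fin 3 → R) :
    imQuat ε v * imQuat ε w = imQuat ε (v ⨯₃ w) - (v ⬝ᵥ w) • 1 := by
  rcases Int.units_eq_one_or ε with rfl | rfl <;> ext i j <;> fin_cases i <;> fin_cases j <;>
    simp [imQuat, skewOfVec, mul_apply, Fin.sum_univ_four, cross_apply, vec3_dotProduct] <;> ring

theorem imQuat_mul_self (ε : ℤˣ) {v : Fin 3 → R} (hv : v ⬝ᵥ v = 1) :
    imQuat ε v * imQuat ε v = -1 := by
  rw [imQuat_mul, cross_self, imQuat_zero, hv, one_smul, zero_sub]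

theorem imQuat_mul_add_mul (ε : ℤˣ) (v w : Fin 3 → R) :
    imQuat ε v * imQuat ε w + imQuat ε w * imQuat ε v = -(2 * (v ⬝ᵥ w)) • 1 := by
  rw [imQuat_mul, imQuat_mul, ← cross_anticomm v w, imQuat_neg, dotProduct_comm w v, neg_smul,
    two_mul, add_smul]
  abel

theorem imQuat_commute_of_ne {ε δ : ℤˣ} (h : ε ≠ δ) (v w : Fin 3 → R) :
    Commute (imQuat ε v) (imQuat δ w) := by
  obtain rfl := Int.units_ne_iff_eq_neg.mp h
  rcases Int.units_eq_one_or δ with rfl | rfl <;> ext i j <;> fin_cases i <;> fin_cases j <;>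
    simp [imQuat, skewOfVec, mul_apply, Fin.sum_univ_four] <;> ring

theorem trace_imQuat (ε : ℤˣ) (v : Fin 3 → R) : (imQuat ε v).trace = 0 := by
  simp [imQuat, skewOfVec, trace, Fin.sum_univ_four]

theorem trace_imQuat_mul (ε δ : ℤˣ) (v w : Fin 3 → R) :
    (imQuat ε v * imQuat δ w).trace = if ε = δ then -4 * (v ⬝ᵥ w) else 0 := by
  rcases Int.units_eq_one_or ε with rfl | rfl <;> rcases Int.units_eq_one_or δ with rfl | rfl <;>
    simp [imQuat, skewOfVec, trace, Fin.sum_univ_four, vec3_dotProduct] <;> ring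

theorem trace_imQuat_mul_mul (ε δ : ℤˣ) (v w v' w' : Fin 3 → R) :
    (imQuat ε v * imQuat ε w * (imQuat δ v' * imQuat δ w')).trace =
      4 * ((v ⬝ᵥ w) * (v' ⬝ᵥ w')) + if ε = δ then -4 * (v ⨯₃ w ⬝ᵥ v' ⨯₃ w') else 0 := by
  simp only [imQuat_mul, sub_mul, mul_sub, trace_sub, trace_imQuat_mul, trace_smul, smul_mul,
    Matrix.mul_smul, Matrix.mul_one, Matrix.one_mul, trace_imQuat, trace_one, Fintype.card_fin,
    smul_eq_mul]
  push_cast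
  ring

theorem imQuat_mem_orthogonalGroup (ε : ℤˣ) {v : Fin 3 → R} (hv : v ⬝ᵥ v = 1) :
    imQuat ε v ∈ orthogonalGroup (Fin 4) R := by
  rw [mem_orthogonalGroup_iff, imQuat_transpose, mul_neg, imQuat_mul_self ε hv, neg_neg]

theorem exists_eq_imQuat [NoZeroDivisors R] [NeZero (2 : R)] {M : Matrix (Fin 4) (Fin 4) R}
    (hM : M ∈ orthogonalGroup (Fin 4) R) (hanti : Mᵀ = -M) :
    ∃ (ε : ℤˣ) (v : Fin 3 → R), v ⬝ᵥ v = 1 ∧ M = imQuat ε v := by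
  obtain ⟨a, w, rfl⟩ := exists_eq_skewOfVec hanti
  obtain ⟨ha, hw, hcross⟩ := dotProduct_and_cross_of_skewOfVec_mem_orthogonalGroup hM
  obtain ⟨ε, rfl⟩ := exists_eq_units_smul_of_cross_eq_zero ha hw hcross
  exact ⟨ε, w, hw, rfl⟩

theorem eq_and_dotProduct_eq_zero_of_imQuat_anticommute [NoZeroDivisors R] [NeZero (2 : R)]
    {ε δ : ℤˣ} {v w : Fin 3 → R} (hv : v ⬝ᵥ v = 1) (hw : w ⬝ᵥ w = 1)
    (h : imQuat ε v * imQuat δ w + imQuat δ w * imQuat ε v = 0) : ε = δ ∧ v ⬝ᵥ w = 0 := by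
  have hε : ε = δ := by
    by_contra hne
    have htwo : (2 : Matrix (Fin 4) (Fin 4) R) = 0 :=
      calc (2 : Matrix (Fin 4) (Fin 4) R)
          = 2 * ((imQuat ε v * imQuat ε v) * (imQuat δ w * imQuat δ w)) := by
            rw [imQuat_mul_self ε hv, imQuat_mul_self δ hw, neg_mul_neg, mul_one, mul_one]
        _ = imQuat ε v * (imQuat ε v * imQuat δ w + imQuat δ w * imQuat ε v) * imQuat δ w := by
            rw [← (imQuat_commute_of_ne hne v w).eq]
            noncomm_ring
        _ = 0 := by rw [h, mul_zero, zero_mul]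
    exact two_ne_zero (α := R) (by simpa [ofNat_apply] using congrFun (congrFun htwo 0) 0)
  subst hε
  rw [imQuat_mul_add_mul] at h
  have hentry := congrFun (congrFun h 0) 0
  exact ⟨rfl, by simpa [two_ne_zero] using hentry⟩

theorem imQuat_inj [NoZeroDivisors R] [NeZero (2 : R)] {ε δ : ℤˣ} {v w : Fin 3 → R} (hv : v ≠ 0) :
    imQuat ε v = imQuat δ w ↔ ε = δ ∧ v = w := by
  refine ⟨fun h => ?_, fun ⟨hε, hvw⟩ => hε ▸ hvw ▸ rfl⟩
  obtain ⟨hsmul, rfl⟩ := skewOfVec_inj.mp h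
  refine ⟨?_, rfl⟩
  by_contra hne
  obtain ⟨k, hk⟩ := Function.ne_iff.mp hv
  have hneg : v k = -v k := by
    have hk' : -δ • v k = δ • v k := Int.units_ne_iff_eq_neg.mp hne ▸ congrFun hsmul k
    rcases Int.units_eq_one_or δ with rfl | rfl
    · simpa [eq_comm] using hk'
    · simpa using hk'
  have hdouble : 2 * v k = 0 := by linear_combination hneg
  exact hk ((mul_eq_zero.mp hdouble).resolve_left two_ne_zero)

end Quaternion

section Frame

/-- The normalized adinkra of chirality `ε`: the first matrix is `1`, the others are the quaternion
multiplications given by the rows of `W`. -/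
def quatFrame (ε : ℤˣ) (W : Matrix (Fin 3) (Fin 3) ℤ) : Fin 4 → Matrix (Fin 4) (Fin 4) ℤ :=
  Fin.cons 1 fun i => imQuat ε (W i)

theorem gadgetSum_cons_one {M M' : Fin 3 → Matrix (Fin 4) (Fin 4) ℤ}
    (hM : ∀ i, (M i)ᵀ = -M i) (hM' : ∀ i, (M' i)ᵀ = -M' i) :
    gadgetSum (Fin.cons 1 M) (Fin.cons 1 M') =
      2 * ∑ i, trace (M i * M' i) +
        ∑ i, ∑ j, if i ≠ j then trace (M i * M j * (M' i * M' j)) else 0 := by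
  simp only [gadgetSum, Fin.sum_univ_succ (n := 3), Fin.cons_zero, Fin.cons_succ, hM, hM',
    Finset.sum_add_distrib, ne_eq, Fin.succ_inj, Fin.succ_ne_zero, (Fin.succ_ne_zero _).symm,
    not_true_eq_false, not_false_eq_true, if_true, if_false, Matrix.transpose_one, Matrix.mul_one,
    Matrix.one_mul, Matrix.neg_mul, Matrix.mul_neg, neg_neg, Matrix.mul_assoc]
  ring

theorem isAdinkra_quatFrame (ε : ℤˣ) {W : Matrix (Fin 3) (Fin 3) ℤ}
    (hW : W ∈ orthogonalGroup (Fin 3) ℤ) : IsAdinkra (quatFrame ε W) := by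
  rw [mem_orthogonalGroup_iff_dotProduct] at hW
  refine isAdinkra_iff.mpr ⟨Fin.cases (one_mem _) fun i =>
    imQuat_mem_orthogonalGroup ε (by simp [hW]), fun I J hIJ => ?_⟩
  cases I using Fin.cases with
  | zero =>
    cases J using Fin.cases with
    | zero => exact absurd rfl hIJ
    | succ j => simp [quatFrame, imQuat_transpose]
  | succ i =>
    cases J using Fin.cases with
    | zero => simp [quatFrame, imQuat_transpose]
    | succ j =>
      have hij : i ≠ j := by simpa using hIJ
      simp only [quatFrame, Fin.cons_succ, imQuat_transpose, neg_mul, ← neg_add,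
        imQuat_mul_add_mul, hW, if_neg hij, mul_zero, neg_zero, zero_smul]

theorem exists_eq_quatFrame {L : Fin 4 → Matrix (Fin 4) (Fin 4) ℤ} (hL : IsAdinkra L)
    (h0 : L 0 = 1) : ∃ ε, ∃ W ∈ orthogonalGroup (Fin 3) ℤ, L = quatFrame ε W := by
  obtain ⟨hmem, hpair⟩ := isAdinkra_iff.mp hL
  have hanti (i : Fin 3) : (L i.succ)ᵀ = -L i.succ := by
    have h : (L 0)ᵀ * L i.succ + (L i.succ)ᵀ * L 0 = 0 := hpair (Fin.succ_ne_zero i).symm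
    rw [h0, transpose_one, Matrix.one_mul, Matrix.mul_one] at h
    exact eq_neg_of_add_eq_zero_right h
  choose ε W hW hLW using fun i : Fin 3 => exists_eq_imQuat (hmem i.succ) (hanti i)
  have hrel {i j : Fin 3} (hij : i ≠ j) : ε i = ε j ∧ W i ⬝ᵥ W j = 0 := by
    have h : (L i.succ)ᵀ * L j.succ + (L j.succ)ᵀ * L i.succ = 0 :=
      hpair ((Fin.succ_injective 3).ne hij)
    rw [hanti, hanti, neg_mul, neg_mul, ← neg_add, neg_eq_zero, hLW, hLW] at h
    exact eq_and_dotProduct_eq_zero_of_imQuat_anticommute (hW i) (hW j) h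
  have hε (i : Fin 3) : ε i = ε 0 := by
    by_cases hi : i = 0
    · rw [hi]
    · exact (hrel hi).1
  refine ⟨ε 0, of W, mem_orthogonalGroup_iff_dotProduct.mpr fun i j => ?_, ?_⟩
  · split_ifs with hij
    · exact hij ▸ hW i
    · exact (hrel hij).2
  · rw [← Fin.cons_self_tail L, h0]
    exact congrArg _ (funext fun i => (hLW i).trans (by rw [hε i]; rfl))

theorem quatFrame_inj {ε δ : ℤˣ} {W W' : Matrix (Fin 3) (Fin 3) ℤ}
    (hW : W ∈ orthogonalGroup (Fin 3) ℤ) : quatFrame ε W = quatFrame δ W' ↔ ε = δ ∧ W = W' := by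
  refine ⟨fun h => ?_, fun ⟨hε, hWW⟩ => hε ▸ hWW ▸ rfl⟩
  have hne (i : Fin 3) : W i ≠ 0 := fun hi => by
    simpa [hi] using mem_orthogonalGroup_iff_dotProduct.mp hW i i
  have hrow (i : Fin 3) : ε = δ ∧ W i = W' i :=
    (imQuat_inj (hne i)).mp (congrFun (Fin.cons_injective2 h).2 i)
  exact ⟨(hrow 0).1, funext fun i => (hrow i).2⟩

theorem gadgetSum_quatFrame (ε δ : ℤˣ) {W W' : Matrix (Fin 3) (Fin 3) ℤ}
    (hW : W ∈ orthogonalGroup (Fin 3) ℤ) (hW' : W' ∈ orthogonalGroup (Fin 3) ℤ) :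
    gadgetSum (quatFrame ε W) (quatFrame δ W') =
      if ε = δ then -8 * (1 + (W * W'ᵀ).det) * (W * W'ᵀ).trace else 0 := by
  set B := W * W'ᵀ
  have hdot (i j : Fin 3) : W i ⬝ᵥ W' j = B i j := rfl
  have hpair (i j : Fin 3) :
      (if i ≠ j then
        trace (imQuat ε (W i) * imQuat ε (W j) * (imQuat δ (W' i) * imQuat δ (W' j))) else 0) =
      if ε = δ then -4 * (B i i * B j j - B i j * B j i) else 0 := by
    rcases eq_or_ne i j with rfl | hij
    · simp
    · rw [if_pos hij, trace_imQuat_mul_mul, mem_orthogonalGroup_iff_dotProduct.mp hW, if_neg hij,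
        cross_dot_cross]
      simp only [hdot, zero_mul, mul_zero, zero_add]
  have hB : B ∈ orthogonalGroup (Fin 3) ℤ := mul_mem hW (transpose_mem_unitaryGroup_iff.mpr hW')
  rw [quatFrame, quatFrame, gadgetSum_cons_one (fun i => imQuat_transpose ε (W i))
    fun i => imQuat_transpose δ (W' i)]
  simp only [hpair, trace_imQuat_mul, hdot]
  split_ifs
  · simp only [← Finset.mul_sum, sum_sum_mul_sub_mul_of_mem_orthogonalGroup hB, trace, diag_apply]
    ring
  · simp

end Frame

section Count

/-- The group parametrizing normalized adinkras: a chirality and an integer orthogonal matrix. -/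
abbrev FrameGroup : Type := ℤˣ × orthogonalGroup (Fin 3) ℤ

/-- The value of `gadgetSum` on two adinkras whose frames have quotient `g`. -/
def relativeGadget (g : FrameGroup) : ℤ :=
  if g.1 = 1 then -8 * (1 + g.2.1.det) * g.2.1.trace else 0

/-- The adinkra with first L-matrix `p.1` and normalized frame `p.2`. -/
def adinkraOfFrame (p : orthogonalGroup (Fin 4) ℤ × FrameGroup) : Adinkra41 :=
  ⟨fun I => p.1.1 * quatFrame p.2.1 p.2.2.1 I, (isAdinkra_quatFrame _ p.2.2.2).mul_left p.1.2⟩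

theorem adinkraOfFrame_injective : Function.Injective adinkraOfFrame := by
  rintro ⟨P, ε, W⟩ ⟨P', δ, W'⟩ h
  have hmul (I : Fin 4) : P.1 * quatFrame ε W.1 I = P'.1 * quatFrame δ W'.1 I :=
    congrFun (congrArg Subtype.val h) I
  have hP : P = P' := Subtype.ext (by simpa [quatFrame] using hmul 0)
  subst hP
  have hframe : quatFrame ε W.1 = quatFrame δ W'.1 :=
    funext fun I => (Unitary.toUnits P).isUnit.mul_left_cancel (hmul I)
  obtain ⟨rfl, hW⟩ := (quatFrame_inj W.2).mp hframe
  rw [Subtype.ext hW]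

theorem adinkraOfFrame_surjective : Function.Surjective adinkraOfFrame := by
  rintro ⟨L, hL⟩
  have hmem := (isAdinkra_iff.mp hL).1 0
  obtain ⟨ε, W, hW, hLW⟩ := exists_eq_quatFrame
    (hL.mul_left (transpose_mem_unitaryGroup_iff.mpr hmem))
    ((mem_orthogonalGroup_iff' _ _).mp hmem)
  refine ⟨(⟨L 0, hmem⟩, ε, ⟨W, hW⟩), Subtype.ext (funext fun I => ?_)⟩
  change L 0 * quatFrame ε W I = L I
  rw [← hLW, ← Matrix.mul_assoc, (mem_orthogonalGroup_iff _ _).mp hmem, Matrix.one_mul]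

theorem gadgetSum_adinkraOfFrame (p q : orthogonalGroup (Fin 4) ℤ × FrameGroup) :
    gadgetSum (adinkraOfFrame p).1 (adinkraOfFrame q).1 = relativeGadget (p.2 / q.2) := by
  obtain ⟨P, ε, W⟩ := p
  obtain ⟨Q, δ, V⟩ := q
  have hdiv : (W / V).1 = W.1 * V.1ᵀ := rfl
  simp only [relativeGadget, Prod.mk_div_mk, div_eq_one, hdiv]
  exact (gadgetSum_mul_left P.2 Q.2 _ _).trans (gadgetSum_quatFrame ε δ W.2 V.2)

theorem natCard_subtype_div_eq {F G α : Type*} [Group G] (f : G → α) (c : α) :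
    Nat.card {p : (F × G) × (F × G) // f (p.1.2 / p.2.2) = c} =
      Nat.card F ^ 2 * Nat.card G * Nat.card {g // f g = c} := by
  let e : {p : (F × G) × (F × G) // f (p.1.2 / p.2.2) = c} ≃ ((F × F) × G) × {g // f g = c} :=
    { toFun := fun p => (((p.1.1.1, p.1.2.1), p.1.2.2), ⟨p.1.1.2 / p.1.2.2, p.2⟩)
      invFun := fun q => ⟨((q.1.1.1, q.2.1 * q.1.2), (q.1.1.2, q.1.2)), by simp [q.2.2]⟩
      left_inv := fun p => by simp
      right_inv := fun q => by simp }
  rw [Nat.card_congr e, Nat.card_prod, Nat.card_prod, Nat.card_prod, sq]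

theorem natCard_gadgetSum_eq (c : ℤ) :
    Nat.card {p : Adinkra41 × Adinkra41 // gadgetSum p.1.1 p.2.1 = c} =
      384 ^ 2 * 96 * Nat.card {g // relativeGadget g = c} := by
  let e := Equiv.ofBijective _ ⟨adinkraOfFrame_injective, adinkraOfFrame_surjective⟩
  have hG : Nat.card FrameGroup = 96 := by
    rw [Nat.card_prod, natCard_orthogonalGroup_int]
    simp [Nat.factorial]
  have hF : Nat.card (orthogonalGroup (Fin 4) ℤ) = 384 := natCard_orthogonalGroup_int 4
  rw [← hF, ← hG, ← natCard_subtype_div_eq]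
  refine (Nat.card_congr ((e.prodCongr e).subtypeEquiv fun p => ?_)).symm
  exact iff_of_eq (congrArg (· = c) (gadgetSum_adinkraOfFrame p.1 p.2).symm)

theorem natCard_relativeGadget_eq (c : ℤ) :
    Nat.card {g // relativeGadget g = c} =
      Fintype.card {x : ℤˣ × (Fin 3 → ℤˣ) × Equiv.Perm (Fin 3) // (if x.1 = 1 then
        -8 * (1 + (signedPerm x.2.1 x.2.2).det) * (signedPerm x.2.1 x.2.2).trace else 0) = c} := by
  rw [← Nat.card_eq_fintype_card]
  exact (Nat.card_congr (((Equiv.refl _).prodCongr (signedPermEquiv 3)).subtypeEquiv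
    fun x => Iff.rfl)).symm

theorem natCard_relativeGadget :
    Nat.card {g // relativeGadget g = -48} = 1 ∧ Nat.card {g // relativeGadget g = -16} = 6 ∧
      Nat.card {g // relativeGadget g = 16} = 9 ∧ Nat.card {g // relativeGadget g = 0} = 80 := by
  simp only [natCard_relativeGadget_eq]
  decide +kernel

end Count

theorem stmt15 :
    Nat.card {p : Adinkra41 × Adinkra41 // gadgetSum p.1.1 p.2.1 = -48} = 14155776 ∧
    Nat.card {p : Adinkra41 × Adinkra41 // gadgetSum p.1.1 p.2.1 = -16} = 84934656 ∧
    Nat.card {p : Adinkra41 × Adinkra41 // gadgetSum p.1.1 p.2.1 = 16} = 127401984 ∧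
    Nat.card {p : Adinkra41 × Adinkra41 // gadgetSum p.1.1 p.2.1 = 0} = 1132462080 := by
  obtain ⟨h₁, h₆, h₉, h₈₀⟩ := natCard_relativeGadget
  simp only [natCard_gadgetSum_eq, h₁, h₆, h₉, h₈₀]
  norm_num
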